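/- Let U ⊆ ℝ⁴ be open and let Γ^n_{bm} : ℝ × U → ℝ (n,m,b ∈ Fin 4) be a smooth one-parameter family of connection coefficients, depending smoothly on a parameter λ and on x ∈ U, with curvature R^n_{m ab}(λ,x) = ∂_a Γ^n_{bm} − ∂_b Γ^n_{am} + Σ_l (Γ^n_{al} Γ^l_{bm} − Γ^n_{bl} Γ^l_{am}) (partial derivatives ∂_a taken in x). Then the variation of the Pontryagin density is a total spatial divergence: at every (λ,x), (1/4) Σ_{a,b,c,d} ε̃(a,b,c,d) Σ_{n,m} ∂_λ ( R^n_{m ab} R^m_{n cd} ) = Σ_{a,b,c,d} ε̃(a,b,c,d) ∂_a ( Σ_{n,m} R^m_{n cd} · ∂_λ Γ^n_{bm} ). -/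

import Mathlib

open scoped BigOperators

/-- The Levi-Civita symbol on `Fin 4`: the sign of the permutation sending
`(0,1,2,3)` to `(a,b,c,d)` when the four indices are distinct, and `0` otherwise. -/
noncomputable def leviCivita (a b c d : Fin 4) : ℝ :=
  ∑ σ : Equiv.Perm (Fin 4),
    if σ 0 = a ∧ σ 1 = b ∧ σ 2 = c ∧ σ 3 = d then ((Equiv.Perm.sign σ : ℤ) : ℝ) else 0

/-- Spatial partial derivative (in the `a`-th coordinate direction of `ℝ⁴`) of a
function of a parameter `λ ∈ ℝ` and a point `x ∈ ℝ⁴`. -/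
noncomputable def pdx (a : Fin 4) (f : ℝ × (Fin 4 → ℝ) → ℝ) (p : ℝ × (Fin 4 → ℝ)) : ℝ :=
  fderiv ℝ f p (0, Pi.single a 1)

/-- Derivative with respect to the parameter `λ`. -/
noncomputable def pdLam (f : ℝ × (Fin 4 → ℝ) → ℝ) (p : ℝ × (Fin 4 → ℝ)) : ℝ :=
  fderiv ℝ f p (1, 0)

/-- The curvature `R^n_{m ab}(λ,x)` of a one-parameter family of connection
coefficients `Γ^n_{bm}(λ,x)`, with partial derivatives taken in `x`. -/
noncomputable def curv (Γ : Fin 4 → Fin 4 → Fin 4 → ℝ × (Fin 4 → ℝ) → ℝ)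
    (n m a b : Fin 4) (p : ℝ × (Fin 4 → ℝ)) : ℝ :=
  pdx a (Γ n b m) p - pdx b (Γ n a m) p
    + ∑ l : Fin 4, (Γ n a l p * Γ l b m p - Γ n b l p * Γ l a m p)

/-!
This is the transgression argument of Chern–Weil theory. Write `F_ab` for the matrices of the
curvature of the connection `A_b = (Γ^n_{bm})`, and `δ` for the derivative in the parameter. Since
the trace is invariant under conjugation, the Leibniz rule for `∂_a tr (X Y)` holds with covariant
derivatives `∇_a X = ∂_a X + [A_a, X]` in place of partial ones. The Palatini identity
`δF_ab = ∇_a δA_b - ∇_b δA_a` and the antisymmetry of `ε` give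
`ε^{abcd} δ tr (F_ab F_cd) = 4 ε^{abcd} tr (F_cd ∇_a δA_b)`, and the Bianchi identity
`ε^{abcd} ∇_a F_cd = 0` allows `∇_a` to be moved in front of the product.
-/

section SecondDerivative

variable {𝕜 E F : Type*} [RCLike 𝕜] [NormedAddCommGroup E] [NormedSpace 𝕜 E]
  [NormedAddCommGroup F] [NormedSpace 𝕜 F] {f : E → F} {p : E}

theorem differentiableAt_fderiv_apply (hf : ContDiffAt 𝕜 2 f p) (v : E) :
    DifferentiableAt 𝕜 (fun q => fderiv 𝕜 f q v) p :=
  ((hf.fderiv_right (m := 1) le_rfl).differentiableAt one_ne_zero).clm_apply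
    (differentiableAt_const v)

theorem fderiv_fderiv_apply_comm (hf : ContDiffAt 𝕜 2 f p) (v w : E) :
    fderiv 𝕜 (fun q => fderiv 𝕜 f q v) p w = fderiv 𝕜 (fun q => fderiv 𝕜 f q w) p v := by
  have hd : DifferentiableAt 𝕜 (fderiv 𝕜 f) p :=
    (hf.fderiv_right (m := 1) le_rfl).differentiableAt one_ne_zero
  have hsymm : IsSymmSndFDerivAt 𝕜 f p := hf.isSymmSndFDerivAt (by simp)
  rw [fderiv_clm_apply hd (differentiableAt_const v),
    fderiv_clm_apply hd (differentiableAt_const w)]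
  simpa using hsymm.eq w v

end SecondDerivative

section Bracket

variable {𝕜 E 𝔸 : Type*} [NontriviallyNormedField 𝕜] [NormedAddCommGroup E] [NormedSpace 𝕜 E]
  [NormedRing 𝔸] [NormedAlgebra 𝕜 𝔸] {X Y : E → 𝔸} {p : E}

theorem differentiableAt_lie (hX : DifferentiableAt 𝕜 X p) (hY : DifferentiableAt 𝕜 Y p) :
    DifferentiableAt 𝕜 (fun q => ⁅X q, Y q⁆) p :=
  (hX.fun_mul hY).fun_sub (hY.fun_mul hX)

theorem fderiv_lie_apply (hX : DifferentiableAt 𝕜 X p) (hY : DifferentiableAt 𝕜 Y p) (v : E) :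
    fderiv 𝕜 (fun q => ⁅X q, Y q⁆) p v = ⁅fderiv 𝕜 X p v, Y p⁆ + ⁅X p, fderiv 𝕜 Y p v⁆ := by
  simp only [Ring.lie_def]
  rw [fderiv_fun_sub (hX.fun_mul hY) (hY.fun_mul hX), fderiv_fun_mul' hX hY, fderiv_fun_mul' hY hX]
  simp only [sub_apply, add_apply, smul_apply, smul_eq_mul, MulOpposite.smul_eq_mul_unop,
    MulOpposite.unop_op]
  abel

theorem fderiv_clm_mul_apply {F : Type*} [NormedAddCommGroup F] [NormedSpace 𝕜 F] (τ : 𝔸 →L[𝕜] F)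
    (hX : DifferentiableAt 𝕜 X p) (hY : DifferentiableAt 𝕜 Y p) (v : E) :
    fderiv 𝕜 (fun q => τ (X q * Y q)) p v
      = τ (fderiv 𝕜 X p v * Y p) + τ (X p * fderiv 𝕜 Y p v) := by
  have hτXY : fderiv 𝕜 (fun q => τ (X q * Y q)) p = τ ∘L fderiv 𝕜 (fun q => X q * Y q) p :=
    (τ.hasFDerivAt.comp p (hX.fun_mul hY).hasFDerivAt).fderiv
  rw [hτXY, fderiv_fun_mul' hX hY]
  simp [add_comm]

end Bracket

section Connection

variable (𝕜 : Type*) {κ E 𝔸 : Type*} [RCLike 𝕜] [NormedAddCommGroup E] [NormedSpace 𝕜 E]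
  [NormedRing 𝔸] [NormedAlgebra 𝕜 𝔸] (e : κ → E) (A : κ → E → 𝔸)

/-- The covariant derivative `∇_a X = ∂_a X + [A_a, X]`, where `A_a` is the component along the
direction `e a` of a connection with values in the algebra `𝔸`. -/
noncomputable def connCovDeriv (a : κ) (X : E → 𝔸) (q : E) : 𝔸 :=
  fderiv 𝕜 X q (e a) + ⁅A a q, X q⁆

/-- The curvature `F_ab = ∂_a A_b - ∂_b A_a + [A_a, A_b]` of the connection with components `A_a`
along constant directions `e a`; constancy is why no term in the bracket of directions occurs. -/
noncomputable def connCurvature (a b : κ) (q : E) : 𝔸 :=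
  fderiv 𝕜 (A b) q (e a) - fderiv 𝕜 (A a) q (e b) + ⁅A a q, A b q⁆

variable {𝕜 e A} {p : E}

theorem differentiableAt_connCurvature (hA : ∀ a, ContDiffAt 𝕜 2 (A a) p) (a b : κ) :
    DifferentiableAt 𝕜 (connCurvature 𝕜 e A a b) p :=
  ((differentiableAt_fderiv_apply (hA b) (e a)).fun_sub
    (differentiableAt_fderiv_apply (hA a) (e b))).fun_add
    (differentiableAt_lie ((hA a).differentiableAt two_ne_zero)
      ((hA b).differentiableAt two_ne_zero))

theorem fderiv_connCurvature_apply (hA : ∀ a, ContDiffAt 𝕜 2 (A a) p) (a b : κ) (v : E) :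
    fderiv 𝕜 (connCurvature 𝕜 e A a b) p v =
      fderiv 𝕜 (fun q => fderiv 𝕜 (A b) q (e a)) p v
        - fderiv 𝕜 (fun q => fderiv 𝕜 (A a) q (e b)) p v
        + (⁅fderiv 𝕜 (A a) p v, A b p⁆ + ⁅A a p, fderiv 𝕜 (A b) p v⁆) := by
  have hd (a : κ) : DifferentiableAt 𝕜 (A a) p := (hA a).differentiableAt two_ne_zero
  have hdd (a b : κ) : DifferentiableAt 𝕜 (fun q => fderiv 𝕜 (A b) q (e a)) p :=
    differentiableAt_fderiv_apply (hA b) (e a)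
  rw [← fderiv_lie_apply (hd a) (hd b)]
  unfold connCurvature
  rw [fderiv_fun_add ((hdd a b).fun_sub (hdd b a)) (differentiableAt_lie (hd a) (hd b)),
    fderiv_fun_sub (hdd a b) (hdd b a), add_apply, sub_apply]

theorem fderiv_connCurvature_eq_connCovDeriv_sub (hA : ∀ a, ContDiffAt 𝕜 2 (A a) p)
    (a b : κ) (w : E) :
    fderiv 𝕜 (connCurvature 𝕜 e A a b) p w =
      connCovDeriv 𝕜 e A a (fun q => fderiv 𝕜 (A b) q w) p
        - connCovDeriv 𝕜 e A b (fun q => fderiv 𝕜 (A a) q w) p := by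
  rw [fderiv_connCurvature_apply hA, fderiv_fderiv_apply_comm (hA b) (e a) w,
    fderiv_fderiv_apply_comm (hA a) (e b) w]
  simp only [connCovDeriv, Ring.lie_def]
  abel

theorem bianchi_connCurvature (hA : ∀ a, ContDiffAt 𝕜 2 (A a) p) (a b c : κ) :
    connCovDeriv 𝕜 e A a (connCurvature 𝕜 e A b c) p
      + connCovDeriv 𝕜 e A b (connCurvature 𝕜 e A c a) p
      + connCovDeriv 𝕜 e A c (connCurvature 𝕜 e A a b) p = 0 := by
  simp only [connCovDeriv, fderiv_connCurvature_apply hA]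
  rw [fderiv_fderiv_apply_comm (hA c) (e b) (e a), fderiv_fderiv_apply_comm (hA a) (e c) (e b),
    fderiv_fderiv_apply_comm (hA b) (e a) (e c)]
  simp only [connCurvature, Ring.lie_def]
  noncomm_ring

theorem fderiv_trace_mul_eq_connCovDeriv {F : Type*} [NormedAddCommGroup F] [NormedSpace 𝕜 F]
    {τ : 𝔸 →L[𝕜] F} (hτ : ∀ x y, τ (x * y) = τ (y * x)) {X Y : E → 𝔸}
    (hX : DifferentiableAt 𝕜 X p) (hY : DifferentiableAt 𝕜 Y p) (a : κ) :
    fderiv 𝕜 (fun q => τ (X q * Y q)) p (e a)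
      = τ (connCovDeriv 𝕜 e A a X p * Y p) + τ (X p * connCovDeriv 𝕜 e A a Y p) := by
  have lie_cancel : τ (⁅A a p, X p⁆ * Y p) + τ (X p * ⁅A a p, Y p⁆) = 0 := by
    rw [← map_add, Ring.lie_def, Ring.lie_def, sub_mul, mul_sub, ← mul_assoc (X p) (A a p) (Y p),
      ← mul_assoc (X p) (Y p), sub_add_sub_cancel, map_sub, mul_assoc, hτ (A a p), sub_self]
  rw [fderiv_clm_mul_apply τ hX hY]
  simp only [connCovDeriv, add_mul, mul_add, map_add]
  rw [add_add_add_comm, lie_cancel, add_zero]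

end Connection

section Antisymmetry

variable {ι κ R : Type*} [Fintype ι] [DecidableEq ι]

/-- A symbol `ε` indexed by `ι`-tuples is totally antisymmetric if permuting the indices multiplies
it by the sign of the permutation. Nothing else is required, in contrast to `AlternatingMap`,
because the indices lie in a bare type `κ`. -/
def IsTotallyAntisymmetric [AddCommGroup R] (ε : (ι → κ) → R) : Prop :=
  ∀ (v : ι → κ) (π : Equiv.Perm ι), ε (v ∘ π) = Equiv.Perm.sign π • ε v

namespace IsTotallyAntisymmetric

variable [Fintype κ] [Ring R] {ε : (ι → κ) → R}

theorem sum_mul_comp (hε : IsTotallyAntisymmetric ε) (π : Equiv.Perm ι) (f : (ι → κ) → R) :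
    ∑ v, ε v * f (v ∘ π) = Equiv.Perm.sign π • ∑ v, ε v * f v := by
  rw [← Equiv.sum_comp (π.symm.arrowCongr (Equiv.refl κ)) fun v => ε v * f v, Finset.smul_sum]
  refine Finset.sum_congr rfl fun v _ => ?_
  change _ = Equiv.Perm.sign π • (ε (v ∘ π) * f (v ∘ π))
  rw [hε, smul_mul_assoc, smul_smul, Int.units_mul_self, one_smul]

theorem sum_mul_comp_of_sign_eq_one (hε : IsTotallyAntisymmetric ε) {π : Equiv.Perm ι}
    (hπ : Equiv.Perm.sign π = 1) (f : (ι → κ) → R) : ∑ v, ε v * f (v ∘ π) = ∑ v, ε v * f v := by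
  rw [hε.sum_mul_comp, hπ, one_smul]

theorem sum_mul_comp_swap (hε : IsTotallyAntisymmetric ε) {i j : ι} (hij : i ≠ j)
    (f : (ι → κ) → R) : ∑ v, ε v * f (v ∘ Equiv.swap i j) = -∑ v, ε v * f v := by
  rw [hε.sum_mul_comp, Equiv.Perm.sign_swap hij, Units.neg_smul, one_smul]

theorem sum_mul_eq_zero_of_cyclic [CharZero R] [NoZeroDivisors R] (hε : IsTotallyAntisymmetric ε)
    {π : Equiv.Perm ι} (hπ : Equiv.Perm.sign π = 1) {f : (ι → κ) → R}
    (hf : ∀ v, f v + f (v ∘ π) + f ((v ∘ π) ∘ π) = 0) : ∑ v, ε v * f v = 0 := by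
  have three_mul_sum : 3 * ∑ v, ε v * f v = 0 := calc
    3 * ∑ v, ε v * f v
      = ∑ v, ε v * f v + ∑ v, ε v * f (v ∘ π) + ∑ v, ε v * f ((v ∘ π) ∘ π) := by
        rw [hε.sum_mul_comp_of_sign_eq_one hπ fun v => f (v ∘ π), hε.sum_mul_comp_of_sign_eq_one hπ]
        noncomm_ring
    _ = 0 := by simp only [← Finset.sum_add_distrib, ← mul_add, hf, mul_zero, Finset.sum_const_zero]
  exact (mul_eq_zero.mp three_mul_sum).resolve_left (OfNat.ofNat_ne_zero 3)

end IsTotallyAntisymmetric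

theorem leviCivita_eq_sum (v : Fin 4 → Fin 4) :
    leviCivita (v 0) (v 1) (v 2) (v 3)
      = ∑ σ : Equiv.Perm (Fin 4), if ⇑σ = v then ((Equiv.Perm.sign σ : ℤ) : ℝ) else 0 := by
  simp [leviCivita, funext_iff, Fin.forall_fin_succ]

theorem isTotallyAntisymmetric_leviCivita :
    IsTotallyAntisymmetric fun v : Fin 4 → Fin 4 => leviCivita (v 0) (v 1) (v 2) (v 3) := by
  intro v π
  simp only [leviCivita_eq_sum]
  rw [← Equiv.sum_comp (Equiv.mulRight π), Finset.smul_sum]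
  refine Finset.sum_congr rfl fun σ _ => ?_
  have hcomp : ⇑(σ * π) = v ∘ π ↔ ⇑σ = v := by
    rw [Equiv.Perm.coe_mul, π.surjective.injective_comp_right.eq_iff]
  simp only [Equiv.coe_mulRight, hcomp, Equiv.Perm.sign_mul, smul_ite, smul_zero, Units.smul_def,
    zsmul_eq_mul, Units.val_mul, Int.cast_mul, mul_comm]

theorem sum_fin_succ_arrow {M : Type*} [AddCommMonoid M] [Fintype κ] {n : ℕ}
    (f : (Fin (n + 1) → κ) → M) : ∑ v, f v = ∑ a, ∑ w, f (Matrix.vecCons a w) := by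
  rw [← Fintype.sum_prod_type', ← Equiv.sum_comp (Fin.consEquiv fun _ => κ)]
  rfl

theorem sum_fin_four_arrow {M : Type*} [AddCommMonoid M] [Fintype κ] (f : (Fin 4 → κ) → M) :
    ∑ v, f v = ∑ a, ∑ b, ∑ c, ∑ d, f ![a, b, c, d] := by
  simp only [sum_fin_succ_arrow, Fintype.sum_unique]
  rfl

end Antisymmetry

section Pontryagin

variable {𝕜 κ E 𝔸 : Type*} [RCLike 𝕜] [Fintype κ] [NormedAddCommGroup E] [NormedSpace 𝕜 E]
  [NormedRing 𝔸] [NormedAlgebra 𝕜 𝔸] {ε : (Fin 4 → κ) → 𝕜} {τ : 𝔸 →L[𝕜] 𝕜}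
  {e : κ → E} {A : κ → E → 𝔸} {p : E}

theorem sum_trace_connCovDeriv_connCurvature_mul (hε : IsTotallyAntisymmetric ε) (τ : 𝔸 →L[𝕜] 𝕜)
    (hA : ∀ a, ContDiffAt 𝕜 2 (A a) p) (X : κ → 𝔸) :
    ∑ v, ε v * τ (connCovDeriv 𝕜 e A (v 0) (connCurvature 𝕜 e A (v 2) (v 3)) p * X (v 1)) = 0 := by
  refine hε.sum_mul_eq_zero_of_cyclic (π := Equiv.swap 0 2 * Equiv.swap 2 3) (by decide) fun v => ?_
  rw [← map_add, ← map_add]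
  change τ (connCovDeriv 𝕜 e A (v 0) (connCurvature 𝕜 e A (v 2) (v 3)) p * X (v 1)
    + connCovDeriv 𝕜 e A (v 2) (connCurvature 𝕜 e A (v 3) (v 0)) p * X (v 1)
    + connCovDeriv 𝕜 e A (v 3) (connCurvature 𝕜 e A (v 0) (v 2)) p * X (v 1)) = 0
  rw [← add_mul, ← add_mul, bianchi_connCurvature hA, zero_mul, map_zero]

theorem sum_trace_connCurvature_mul_fderiv_connCurvature (hε : IsTotallyAntisymmetric ε)
    (τ : 𝔸 →L[𝕜] 𝕜) (hA : ∀ a, ContDiffAt 𝕜 2 (A a) p) (w : E) :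
    ∑ v, ε v * τ (connCurvature 𝕜 e A (v 2) (v 3) p *
        fderiv 𝕜 (connCurvature 𝕜 e A (v 0) (v 1)) p w)
      = 2 * ∑ v, ε v * τ (connCurvature 𝕜 e A (v 2) (v 3) p *
          connCovDeriv 𝕜 e A (v 0) (fun q => fderiv 𝕜 (A (v 1)) q w) p) := by
  have swap_first_pair : ∑ v, ε v * τ (connCurvature 𝕜 e A (v 2) (v 3) p *
        connCovDeriv 𝕜 e A (v 1) (fun q => fderiv 𝕜 (A (v 0)) q w) p)
      = -∑ v, ε v * τ (connCurvature 𝕜 e A (v 2) (v 3) p *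
          connCovDeriv 𝕜 e A (v 0) (fun q => fderiv 𝕜 (A (v 1)) q w) p) := by
    rw [← hε.sum_mul_comp_swap (zero_ne_one (α := Fin 4))]
    rfl
  simp only [fderiv_connCurvature_eq_connCovDeriv_sub hA, mul_sub, map_sub, Finset.sum_sub_distrib]
  rw [swap_first_pair, sub_neg_eq_add, two_mul]

theorem sum_fderiv_trace_connCurvature_mul_connCurvature (hε : IsTotallyAntisymmetric ε)
    (hτ : ∀ x y, τ (x * y) = τ (y * x)) (hA : ∀ a, ContDiffAt 𝕜 2 (A a) p) (w : E) :
    ∑ v, ε v * fderiv 𝕜 (fun q => τ (connCurvature 𝕜 e A (v 0) (v 1) q *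
        connCurvature 𝕜 e A (v 2) (v 3) q)) p w
      = 2 * ∑ v, ε v * τ (connCurvature 𝕜 e A (v 2) (v 3) p *
          fderiv 𝕜 (connCurvature 𝕜 e A (v 0) (v 1)) p w) := by
  have hF (a b : κ) := differentiableAt_connCurvature (e := e) hA a b
  have exchange_pairs : ∑ v, ε v * τ (connCurvature 𝕜 e A (v 0) (v 1) p *
        fderiv 𝕜 (connCurvature 𝕜 e A (v 2) (v 3)) p w)
      = ∑ v, ε v * τ (connCurvature 𝕜 e A (v 2) (v 3) p *
          fderiv 𝕜 (connCurvature 𝕜 e A (v 0) (v 1)) p w) := by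
    rw [← hε.sum_mul_comp_of_sign_eq_one (π := Equiv.swap 0 2 * Equiv.swap 1 3) (by decide)]
    rfl
  simp only [fderiv_clm_mul_apply τ (hF _ _) (hF _ _), mul_add, Finset.sum_add_distrib]
  rw [exchange_pairs, two_mul]
  simp only [hτ (fderiv 𝕜 _ p w)]

theorem variation_of_pontryagin_is_total_divergence_general (hε : IsTotallyAntisymmetric ε)
    (hτ : ∀ x y, τ (x * y) = τ (y * x)) (hA : ∀ a, ContDiffAt 𝕜 2 (A a) p) (w : E) :
    (1 / 4) * ∑ v, ε v * fderiv 𝕜 (fun q => τ (connCurvature 𝕜 e A (v 0) (v 1) q *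
        connCurvature 𝕜 e A (v 2) (v 3) q)) p w
      = ∑ v, ε v * fderiv 𝕜 (fun q => τ (connCurvature 𝕜 e A (v 2) (v 3) q *
          fderiv 𝕜 (A (v 1)) q w)) p (e (v 0)) := by
  have hF (a b : κ) := differentiableAt_connCurvature (e := e) hA a b
  have hδ (b : κ) := differentiableAt_fderiv_apply (hA b) w
  simp only [fderiv_trace_mul_eq_connCovDeriv (A := A) hτ (hF _ _) (hδ _), mul_add,
    Finset.sum_add_distrib]
  rw [sum_trace_connCovDeriv_connCurvature_mul hε τ hA fun b => fderiv 𝕜 (A b) p w, zero_add,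
    sum_fderiv_trace_connCurvature_mul_connCurvature hε hτ hA,
    sum_trace_connCurvature_mul_fderiv_connCurvature hε τ hA]
  ring

end Pontryagin

section Matrix

open scoped Matrix.Norms.Operator

variable {𝕜 E m n : Type*} [RCLike 𝕜] [NormedAddCommGroup E] [NormedSpace 𝕜 E]
  {X : E → Matrix m n 𝕜} {p : E}

theorem contDiffAt_matrix [Fintype m] [Fintype n] {k : WithTop ℕ∞}
    (hX : ∀ i j, ContDiffAt 𝕜 k (fun q => X q i j) p) : ContDiffAt 𝕜 k X p :=
  (Matrix.ofLinearEquiv (m := m) (n := n) (α := 𝕜) 𝕜).toContinuousLinearEquiv.contDiff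
    |>.comp_contDiffAt p (contDiffAt_pi.2 fun i => contDiffAt_pi.2 fun j => hX i j)

theorem hasFDerivAt_matrix_apply [Finite m] [Finite n] {X' : E →L[𝕜] Matrix m n 𝕜}
    (hX : HasFDerivAt X X' p) (i : m) (j : n) :
    HasFDerivAt (fun q => X q i j)
      (LinearMap.toContinuousLinearMap (Matrix.entryLinearMap 𝕜 𝕜 i j) ∘L X') p := by
  cases nonempty_fintype m
  cases nonempty_fintype n
  exact (LinearMap.toContinuousLinearMap (Matrix.entryLinearMap 𝕜 𝕜 i j)).hasFDerivAt.comp p hX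

end Matrix

section Coordinates

open scoped Matrix.Norms.Operator

/-- The connection coefficients `Γ^n_{bm}` as matrix-valued components: `n` is the row, `m` the
column and `b` the direction. -/
def connMatrix (Γ : Fin 4 → Fin 4 → Fin 4 → ℝ × (Fin 4 → ℝ) → ℝ) (b : Fin 4)
    (q : ℝ × (Fin 4 → ℝ)) : Matrix (Fin 4) (Fin 4) ℝ :=
  Matrix.of fun n m => Γ n b m q

/-- The coordinate directions of `ℝ⁴` as vectors of `ℝ × ℝ⁴`. -/
def spatialDir (a : Fin 4) : ℝ × (Fin 4 → ℝ) := (0, Pi.single a 1)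

variable {Γ : Fin 4 → Fin 4 → Fin 4 → ℝ × (Fin 4 → ℝ) → ℝ} {p : ℝ × (Fin 4 → ℝ)}

theorem contDiffAt_connMatrix (hΓ : ∀ n b m, ContDiffAt ℝ 2 (Γ n b m) p) (b : Fin 4) :
    ContDiffAt ℝ 2 (connMatrix Γ b) p :=
  contDiffAt_matrix fun n m => hΓ n b m

theorem fderiv_connMatrix_apply (hΓ : ∀ n b m, ContDiffAt ℝ 2 (Γ n b m) p) (b n m : Fin 4)
    (v : ℝ × (Fin 4 → ℝ)) : fderiv ℝ (connMatrix Γ b) p v n m = fderiv ℝ (Γ n b m) p v :=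
  (congrArg (fun T => T v) (hasFDerivAt_matrix_apply
    ((contDiffAt_connMatrix hΓ b).differentiableAt two_ne_zero).hasFDerivAt n m).fderiv).symm

-- Where a single coefficient is not differentiable, `fderiv` of the whole matrix is `0`, so the
-- two curvatures may differ there.
theorem connCurvature_connMatrix_apply (hΓ : ∀ n b m, ContDiffAt ℝ 2 (Γ n b m) p)
    (a b n m : Fin 4) :
    connCurvature ℝ spatialDir (connMatrix Γ) a b p n m = curv Γ n m a b p := by
  have deriv_entry (a b : Fin 4) : fderiv ℝ (connMatrix Γ b) p (spatialDir a) n m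
      = pdx a (Γ n b m) p := fderiv_connMatrix_apply hΓ b n m (spatialDir a)
  have lie_entry : ⁅connMatrix Γ a p, connMatrix Γ b p⁆ n m
      = ∑ l, (Γ n a l p * Γ l b m p - Γ n b l p * Γ l a m p) := by
    rw [Ring.lie_def, Matrix.sub_apply, Matrix.mul_apply, Matrix.mul_apply,
      ← Finset.sum_sub_distrib]
    rfl
  rw [curv, ← deriv_entry, ← deriv_entry, ← lie_entry]
  rfl

theorem eventually_contDiffAt_coefficients (hΓ : ∀ n b m, ContDiffAt ℝ 2 (Γ n b m) p) :
    ∀ᶠ q in nhds p, ∀ n b m, ContDiffAt ℝ 2 (Γ n b m) q := by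
  simp only [Filter.eventually_all]
  exact fun n b m => (hΓ n b m).eventually (by simp)

theorem differentiableAt_curv (hΓ : ∀ n b m, ContDiffAt ℝ 2 (Γ n b m) p) (n m a b : Fin 4) :
    DifferentiableAt ℝ (curv Γ n m a b) p :=
  (hasFDerivAt_matrix_apply (differentiableAt_connCurvature (e := spatialDir)
    (contDiffAt_connMatrix hΓ) a b).hasFDerivAt n m).differentiableAt.congr_of_eventuallyEq <|
    (eventually_contDiffAt_coefficients hΓ).mono fun _ hq =>
      (connCurvature_connMatrix_apply hq a b n m).symm

/-- The matrix trace as a continuous linear functional. -/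
noncomputable def matrixTraceCLM : Matrix (Fin 4) (Fin 4) ℝ →L[ℝ] ℝ :=
  LinearMap.toContinuousLinearMap (Matrix.traceLinearMap (Fin 4) ℝ ℝ)

theorem matrixTraceCLM_mul_comm (M N : Matrix (Fin 4) (Fin 4) ℝ) :
    matrixTraceCLM (M * N) = matrixTraceCLM (N * M) :=
  Matrix.trace_mul_comm M N

theorem matrixTraceCLM_mul (M N : Matrix (Fin 4) (Fin 4) ℝ) :
    matrixTraceCLM (M * N) = ∑ n, ∑ m, M n m * N m n := rfl

theorem sum_pdLam_curv_mul_curv (hΓ : ∀ n b m, ContDiffAt ℝ 2 (Γ n b m) p) (a b c d : Fin 4) :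
    ∑ n, ∑ m, pdLam (fun q => curv Γ n m a b q * curv Γ m n c d q) p
      = fderiv ℝ (fun q => matrixTraceCLM (connCurvature ℝ spatialDir (connMatrix Γ) a b q *
          connCurvature ℝ spatialDir (connMatrix Γ) c d q)) p (1, 0) := by
  have trace_eq : (fun q => matrixTraceCLM (connCurvature ℝ spatialDir (connMatrix Γ) a b q *
        connCurvature ℝ spatialDir (connMatrix Γ) c d q))
      =ᶠ[nhds p] fun q => ∑ n, ∑ m, curv Γ n m a b q * curv Γ m n c d q := by
    filter_upwards [eventually_contDiffAt_coefficients hΓ] with q hq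
    simp only [matrixTraceCLM_mul, connCurvature_connMatrix_apply hq]
  have hmul (n m : Fin 4) : DifferentiableAt ℝ (fun q => curv Γ n m a b q * curv Γ m n c d q) p :=
    (differentiableAt_curv hΓ n m a b).fun_mul (differentiableAt_curv hΓ m n c d)
  rw [trace_eq.fderiv_eq, fderiv_fun_sum fun n _ => DifferentiableAt.fun_sum fun m _ => hmul n m]
  simp only [fderiv_fun_sum fun m _ => hmul _ m, sum_apply, pdLam]

theorem pdx_sum_curv_mul_pdLam (hΓ : ∀ n b m, ContDiffAt ℝ 2 (Γ n b m) p) (a b c d : Fin 4) :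
    pdx a (fun q => ∑ n, ∑ m, curv Γ m n c d q * pdLam (Γ n b m) q) p
      = fderiv ℝ (fun q => matrixTraceCLM (connCurvature ℝ spatialDir (connMatrix Γ) c d q *
          fderiv ℝ (connMatrix Γ b) q (1, 0))) p (spatialDir a) := by
  have trace_eq : (fun q => matrixTraceCLM (connCurvature ℝ spatialDir (connMatrix Γ) c d q *
        fderiv ℝ (connMatrix Γ b) q (1, 0)))
      =ᶠ[nhds p] fun q => ∑ n, ∑ m, curv Γ m n c d q * pdLam (Γ n b m) q := by
    filter_upwards [eventually_contDiffAt_coefficients hΓ] with q hq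
    simp only [matrixTraceCLM_mul, connCurvature_connMatrix_apply hq, fderiv_connMatrix_apply hq]
    exact Finset.sum_comm
  rw [trace_eq.fderiv_eq]
  rfl

theorem pdLam_pontryagin_eq_pdx_of_contDiffAt (hΓ : ∀ n b m, ContDiffAt ℝ 2 (Γ n b m) p) :
    (1 / 4) * ∑ a, ∑ b, ∑ c, ∑ d, leviCivita a b c d *
        ∑ n, ∑ m, pdLam (fun q => curv Γ n m a b q * curv Γ m n c d q) p
      = ∑ a, ∑ b, ∑ c, ∑ d, leviCivita a b c d *
          pdx a (fun q => ∑ n, ∑ m, curv Γ m n c d q * pdLam (Γ n b m) q) p := by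
  have variation := variation_of_pontryagin_is_total_divergence_general
    (𝔸 := Matrix (Fin 4) (Fin 4) ℝ) (e := spatialDir) isTotallyAntisymmetric_leviCivita
    matrixTraceCLM_mul_comm (contDiffAt_connMatrix hΓ) (1, 0)
  rw [sum_fin_four_arrow, sum_fin_four_arrow] at variation
  simp only [sum_pdLam_curv_mul_curv hΓ, pdx_sum_curv_mul_pdLam hΓ]
  exact variation

end Coordinates

/-- The variation (derivative in the parameter `λ`) of the Pontryagin density is a
total spatial divergence:
`(1/4) ε̃(a,b,c,d) ∂_λ(R^n_{m ab} R^m_{n cd}) = ε̃(a,b,c,d) ∂_a(R^m_{n cd} ∂_λ Γ^n_{bm})`. -/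
theorem variation_of_pontryagin_is_total_divergence
    (U : Set (Fin 4 → ℝ)) (hU : IsOpen U)
    (Γ : Fin 4 → Fin 4 → Fin 4 → ℝ × (Fin 4 → ℝ) → ℝ)
    (hΓ : ∀ n b m : Fin 4, ContDiffOn ℝ (⊤ : ℕ∞) (Γ n b m) (Set.univ ×ˢ U)) :
    ∀ p : ℝ × (Fin 4 → ℝ), p.2 ∈ U →
      (1/4) * ∑ a : Fin 4, ∑ b : Fin 4, ∑ c : Fin 4, ∑ d : Fin 4,
          leviCivita a b c d *
            ∑ n : Fin 4, ∑ m : Fin 4,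
              pdLam (fun q => curv Γ n m a b q * curv Γ m n c d q) p
        = ∑ a : Fin 4, ∑ b : Fin 4, ∑ c : Fin 4, ∑ d : Fin 4,
            leviCivita a b c d *
              pdx a (fun q => ∑ n : Fin 4, ∑ m : Fin 4,
                curv Γ m n c d q * pdLam (Γ n b m) q) p := by
  intro p hp
  have hmem : Set.univ ×ˢ U ∈ nhds p := (isOpen_univ.prod hU).mem_nhds ⟨trivial, hp⟩
  exact pdLam_pontryagin_eq_pdx_of_contDiffAt fun n b m =>
    ((hΓ n b m).contDiffAt hmem).of_le (by norm_cast)
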